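/- arXiv:2507.04187 — 3 statements merged into one kernel-verified Lean document; each statement's English description precedes it below -/
import Mathlib

section
/- Let (Ω,ℱ,P) be a probability space, S a random element of a standard Borel space 𝒮 with law μ, and κ_1,…,κ_p Markov kernels from 𝒮 to ℝ. Suppose the joint law of (A, Ã, S) ∈ ℝ^p × ℝ^p × 𝒮 is obtained by first drawing S ~ μ and then, conditionally on S, drawing the 2p real coordinates A_1,…,A_p, Ã_1,…,Ã_p mutually independently with A_j and Ã_j each distributed according to κ_j(S, ·) for every j ∈ {1,…,p}. Then for every subset Ω ⊆ {1,…,p}, the triple ([A, Ã]_swap(Ω), S) has the same joint distribution as ((A, Ã), S). -/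
open MeasureTheory ProbabilityTheory

/-- The swapped pair `[a, ã]_swap(Ω)`: for `j ∈ Ω` the `j`-th coordinates of `a` and `ã`
are exchanged, all other coordinates are left unchanged. -/
def swapPair {p : ℕ} (Ωs : Finset (Fin p)) (a a' : Fin p → ℝ) :
    (Fin p → ℝ) × (Fin p → ℝ) :=
  (fun j => if j ∈ Ωs then a' j else a j, fun j => if j ∈ Ωs then a j else a' j)

/-!
When the independent coordinates `A_j` and `Ã_j` have the same law for every `j ∈ Ω`, the swap maps
each rectangle to a rectangle of the same measure, so it preserves the conditional law of `(A, Ã)`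
given `S = s`. As it fixes `S`, it then preserves the mixture over `s` of these conditional laws,
which is the joint law of `(A, Ã, S)`.
-/

section SwapCoords

variable {ι : Type*} {X : ι → Type*} (J : Set ι) [∀ j, Decidable (j ∈ J)]

/-- The swap of the coordinates in `J` between the two components of a pair of dependent functions.
It extends `swapPair` to arbitrary index types and coordinate spaces, and is uncurried so that it
can be used as a measurable self-map of the product space. -/
def swapCoords (q : (∀ j, X j) × (∀ j, X j)) : (∀ j, X j) × (∀ j, X j) :=
  (J.piecewise q.2 q.1, J.piecewise q.1 q.2)

theorem swapCoords_preimage_pi_prod_pi (t u : ∀ j, Set (X j)) :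
    swapCoords J ⁻¹' (Set.univ.pi t ×ˢ Set.univ.pi u) =
      Set.univ.pi (J.piecewise u t) ×ˢ Set.univ.pi (J.piecewise t u) := by
  ext q
  simp only [swapCoords, Set.mem_preimage, Set.mem_prod, Set.mem_univ_pi, ← forall_and]
  refine forall_congr' fun j => ?_
  by_cases hj : j ∈ J <;> simp [hj, and_comm]

variable [∀ j, MeasurableSpace (X j)]

@[fun_prop]
theorem measurable_swapCoords : Measurable (swapCoords (X := X) J) := by
  refine .prodMk (measurable_pi_lambda _ fun j => ?_) (measurable_pi_lambda _ fun j => ?_) <;>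
    by_cases hj : j ∈ J <;> simp only [Set.piecewise, hj, if_true, if_false] <;> fun_prop

end SwapCoords

section ProductMeasure

variable {ι ι' : Type*} [Fintype ι] [Fintype ι'] {X : ι → Type*} {Y : ι' → Type*}
  [∀ i, MeasurableSpace (X i)] [∀ i, MeasurableSpace (Y i)]

theorem prod_pi_eq {μ : ∀ i, Measure (X i)} {ν : ∀ i, Measure (Y i)} [∀ i, SigmaFinite (μ i)]
    [∀ i, SigmaFinite (ν i)] {ρ : Measure ((∀ i, X i) × (∀ i, Y i))}
    (h : ∀ t u, (∀ i, MeasurableSet (t i)) → (∀ i, MeasurableSet (u i)) →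
      ρ (Set.univ.pi t ×ˢ Set.univ.pi u) = (∏ i, μ i (t i)) * ∏ i, ν i (u i)) :
    (Measure.pi μ).prod (Measure.pi ν) = ρ := by
  refine Measure.prod_eq_generateFrom generateFrom_pi generateFrom_pi isPiSystem_pi isPiSystem_pi
    (.pi fun i => (μ i).toFiniteSpanningSetsIn) (.pi fun i => (ν i).toFiniteSpanningSetsIn) ?_
  rintro _ ⟨t, ht, rfl⟩ _ ⟨u, hu, rfl⟩
  rw [h t u (fun i => ht i trivial) (fun i => hu i trivial), Measure.pi_pi, Measure.pi_pi]

theorem measurePreserving_swapCoords {μ ν : ∀ i, Measure (X i)} [∀ i, SigmaFinite (μ i)]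
    [∀ i, SigmaFinite (ν i)] (J : Set ι) [∀ i, Decidable (i ∈ J)] (h : ∀ i ∈ J, μ i = ν i) :
    MeasurePreserving (swapCoords J) ((Measure.pi μ).prod (Measure.pi ν))
      ((Measure.pi μ).prod (Measure.pi ν)) where
  measurable := measurable_swapCoords J
  map_eq := by
    refine (prod_pi_eq fun t u ht hu => ?_).symm
    rw [Measure.map_apply (measurable_swapCoords J) (.prod (.univ_pi ht) (.univ_pi hu)),
      swapCoords_preimage_pi_prod_pi, Measure.prod_prod, Measure.pi_pi, Measure.pi_pi,
      ← Finset.prod_mul_distrib, ← Finset.prod_mul_distrib]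
    refine Finset.prod_congr rfl fun i _ => ?_
    by_cases hi : i ∈ J
    · simp [hi, h i hi, mul_comm]
    · simp [hi]

theorem measurable_measure_pi {𝒮 : Type*} [MeasurableSpace 𝒮] {κ : ∀ i, 𝒮 → Measure (X i)}
    [∀ i s, IsFiniteMeasure (κ i s)] (hκ : ∀ i, Measurable (κ i)) :
    Measurable fun s => Measure.pi fun i => κ i s := by
  have measurable_rectangle (t : ∀ i, Set (X i)) (ht : ∀ i, MeasurableSet (t i)) :
      Measurable fun s => Measure.pi (fun i => κ i s) (Set.univ.pi t) := by
    simp only [Measure.pi_pi]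
    exact Finset.measurable_fun_prod _ fun i _ => (Measure.measurable_coe (ht i)).comp (hκ i)
  refine .measure_of_isPiSystem generateFrom_pi.symm isPiSystem_pi ?_ ?_
  · rintro _ ⟨t, ht, rfl⟩
    exact measurable_rectangle t fun i => ht i trivial
  · simpa only [Set.pi_univ] using measurable_rectangle (fun _ => Set.univ) fun _ => .univ

end ProductMeasure

section Mixture

variable {𝒮 E F : Type*} [MeasurableSpace 𝒮] [MeasurableSpace E] [MeasurableSpace F]

theorem measurePreserving_comp_of_ae_map_eq {μ : Measure 𝒮} {κ : Kernel 𝒮 E} {f : E → E}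
    (hf : Measurable f) (h : ∀ᵐ s ∂μ, (κ s).map f = κ s) :
    MeasurePreserving f (κ ∘ₘ μ) (κ ∘ₘ μ) where
  measurable := hf
  map_eq := by
    rw [Measure.map_comp _ _ hf]
    refine Measure.comp_congr ?_
    filter_upwards [h] with s hs
    rw [Kernel.map_apply _ hf, hs]

theorem prod_prod_dirac_eq_map (μ : Measure E) (ν : Measure F) [SFinite μ] [SFinite ν] (s : 𝒮) :
    μ.prod (ν.prod (Measure.dirac s)) = (μ.prod ν).map fun q => (q.1, q.2, s) := by
  rw [← Measure.prodAssoc_prod, Measure.prod_dirac,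
    Measure.map_map MeasurableEquiv.prodAssoc.measurable measurable_prodMk_right]
  rfl

end Mixture

section Kernel

variable {ι 𝒮 : Type*} [Fintype ι] {X : ι → Type*} [MeasurableSpace 𝒮]
  [∀ j, MeasurableSpace (X j)] (κ κ' : ∀ j, Kernel 𝒮 (X j)) [∀ j, IsFiniteKernel (κ j)]
  [∀ j, IsFiniteKernel (κ' j)]

/-- The product of finitely many finite kernels with a common source: given `s`, the coordinates
are drawn independently, the `j`-th one from `κ j s`. -/
noncomputable def piKernel : Kernel 𝒮 (∀ j, X j) where
  toFun s := Measure.pi fun j => κ j s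
  measurable' := measurable_measure_pi fun j => (κ j).measurable

instance piKernel.instIsFiniteKernel : IsFiniteKernel (piKernel κ) where
  exists_univ_le := by
    refine ⟨∏ j, (κ j).bound, ENNReal.prod_lt_top fun j _ => (κ j).bound_lt_top, fun s => ?_⟩
    exact (Measure.pi_univ fun j => κ j s).trans_le
      (Finset.prod_le_prod' fun j _ => (κ j).measure_le_bound s Set.univ)

/-- The conditional law of `(A, Ã, S)` given `S = s`, when all the coordinates `A_j`, `Ã_j` are
conditionally mutually independent, with laws `κ j s` and `κ' j s` respectively. -/
noncomputable def knockoffKernel : Kernel 𝒮 ((∀ j, X j) × (∀ j, X j) × 𝒮) :=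
  piKernel κ ×ₖ (piKernel κ' ×ₖ Kernel.id)

theorem knockoffKernel_apply (s : 𝒮) :
    knockoffKernel κ κ' s =
      ((Measure.pi fun j => κ j s).prod (Measure.pi fun j => κ' j s)).map
        fun q => (q.1, q.2, s) := by
  rw [knockoffKernel, Kernel.prod_apply, Kernel.prod_apply, Kernel.id_apply, prod_prod_dirac_eq_map]
  rfl

variable {κ κ'} {μ : Measure 𝒮}

theorem measurePreserving_swapCoords_knockoffKernel_comp (J : Set ι) [∀ j, Decidable (j ∈ J)]
    (h : ∀ j ∈ J, κ j =ᵐ[μ] κ' j) :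
    MeasurePreserving
      (fun t => ((swapCoords J (t.1, t.2.1)).1, (swapCoords J (t.1, t.2.1)).2, t.2.2))
      (knockoffKernel κ κ' ∘ₘ μ) (knockoffKernel κ κ' ∘ₘ μ) := by
  have measurable_swap : Measurable fun t : (∀ j, X j) × (∀ j, X j) × 𝒮 =>
      swapCoords J (t.1, t.2.1) := by fun_prop
  have measurable_swap_fst_snd : Measurable fun t : (∀ j, X j) × (∀ j, X j) × 𝒮 =>
      ((swapCoords J (t.1, t.2.1)).1, (swapCoords J (t.1, t.2.1)).2, t.2.2) :=
    measurable_swap.fst.prodMk (measurable_swap.snd.prodMk (by fun_prop))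
  refine measurePreserving_comp_of_ae_map_eq measurable_swap_fst_snd ?_
  have ae_eq_on : ∀ᵐ s ∂μ, ∀ j ∈ J, κ j s = κ' j s :=
    (ae_ball_iff J.to_countable).2 h
  filter_upwards [ae_eq_on] with s hs
  have measurable_triple : Measurable fun q : (∀ j, X j) × (∀ j, X j) => (q.1, q.2, s) := by
    fun_prop
  rw [knockoffKernel_apply]
  nth_rw 2 [← (measurePreserving_swapCoords J hs).map_eq]
  rw [Measure.map_map measurable_swap_fst_snd measurable_triple,
    Measure.map_map measurable_triple (measurable_swapCoords J)]
  rfl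

theorem knockoff_swap_exchangeable_general {Ω : Type*} [MeasurableSpace Ω] {P : Measure Ω}
    {A A' : Ω → ∀ j, X j} {S : Ω → 𝒮}
    (hlaw : HasLaw (fun ω => (A ω, A' ω, S ω)) (knockoffKernel κ κ' ∘ₘ μ) P)
    (J : Set ι) [∀ j, Decidable (j ∈ J)] (h : ∀ j ∈ J, κ j =ᵐ[μ] κ' j) :
    IdentDistrib
      (fun ω => ((swapCoords J (A ω, A' ω)).1, (swapCoords J (A ω, A' ω)).2, S ω))
      (fun ω => (A ω, A' ω, S ω)) P P :=
  ((measurePreserving_swapCoords_knockoffKernel_comp J h).fun_comp_hasLaw hlaw).identDistrib hlaw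

end Kernel

/-- exchangeability of resampled knockoffs, Lemma 1.
Let `S` be a random element of a standard Borel space `𝒮` with law `μ` and let
`κ_1, …, κ_p` be Markov kernels from `𝒮` to `ℝ`.  Suppose the joint law of `(A, Ã, S)` is
obtained by drawing `S ~ μ` and then, conditionally on `S`, drawing the `2p` coordinates
`A_1, …, A_p, Ã_1, …, Ã_p` mutually independently, `A_j` and `Ã_j` each with law `κ_j(S,·)`.
Then for every subset `Ω ⊆ {1,…,p}`, the triple `([A, Ã]_swap(Ω), S)` has the same joint
distribution as `((A, Ã), S)`. -/
theorem knockoff_swap_exchangeable {p : ℕ} {Ω 𝒮 : Type*}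
    [MeasurableSpace Ω] [MeasurableSpace 𝒮] [StandardBorelSpace 𝒮]
    (P : Measure Ω) [IsProbabilityMeasure P]
    (μ : Measure 𝒮) [IsProbabilityMeasure μ]
    (κ : Fin p → Kernel 𝒮 ℝ) [∀ j, IsMarkovKernel (κ j)]
    (A A' : Ω → Fin p → ℝ) (S : Ω → 𝒮)
    (hA : Measurable A) (hA' : Measurable A') (hS : Measurable S)
    (hlaw : P.map (fun ω => (A ω, A' ω, S ω)) =
      μ.bind fun s =>
        Measure.map (fun q : (Fin p → ℝ) × (Fin p → ℝ) => (q.1, q.2, s))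
          ((Measure.pi fun j => κ j s).prod (Measure.pi fun j => κ j s))) :
    ∀ Ωs : Finset (Fin p),
      P.map (fun ω => ((swapPair Ωs (A ω) (A' ω)).1, (swapPair Ωs (A ω) (A' ω)).2, S ω))
        = P.map (fun ω => (A ω, A' ω, S ω)) := by
  intro Ωs
  have mixture_eq := congrArg μ.bind (funext (knockoffKernel_apply κ κ))
  exact (knockoff_swap_exchangeable_general ⟨by fun_prop, hlaw.trans mixture_eq.symm⟩
    (Ωs : Set (Fin p)) fun _ _ => .rfl).map_eq
end

section
/- Let (A, Ã, S, Y) be a random element of ℝ^p × ℝ^p × 𝒮 × 𝒴 and H0 ⊆ {1,…,p} such that for every Ω ⊆ H0, the quadruple ([A, Ã]_swap(Ω), S, Y) has the same joint distribution as ((A, Ã), S, Y). Let h be a measurable map from ℝ^p × ℝ^p × 𝒮 × 𝒴 to ℝ^p satisfying the flip-sign property, and set W = h(A, Ã, S, Y). Let ε = (ε_1,…,ε_p) ∈ {−1, +1}^p be a random sign vector, independent of (A, Ã, S, Y), with ε_j = +1 almost surely for every j ∉ H0 and with (ε_j)_{j∈H0} i.i.d. uniform on {−1, +1}. Then the random vector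 (ε_1 W_1, …, ε_p W_p) has the same distribution as (W_1, …, W_p). -/
open MeasureTheory ProbabilityTheory
open scoped ENNReal

/-- The uniform distribution on `{−1, +1} ⊆ ℝ`. -/
noncomputable def signMeasure : Measure ℝ :=
  (2⁻¹ : ℝ≥0∞) • Measure.dirac (-1) + (2⁻¹ : ℝ≥0∞) • Measure.dirac 1

/-! Multiplying a flip-sign statistic `W` by a fixed sign vector that is `-1` exactly on `s ⊆ H0`
amounts to evaluating it on the data swapped along `s`, so it preserves the law of `W`. By
independence, the law of `ε * W` is the multiplicative convolution of the laws of `ε` and `W`, an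
average of translates that are all equal to the law of `W`. -/

section Convolution

variable {M : Type*} [Monoid M] [MeasurableSpace M] [MeasurableMul₂ M]

lemma mconv_eq_right_of_ae_measurePreserving {ν μ : Measure M} [IsProbabilityMeasure ν]
    [SFinite μ] (hμ : ∀ᵐ x ∂ν, MeasurePreserving (x * ·) μ μ) : ν ∗ₘ μ = μ := by
  refine Measure.ext_of_lintegral _ fun f hf ↦ ?_
  calc ∫⁻ z, f z ∂(ν ∗ₘ μ)
      = ∫⁻ x, ∫⁻ y, f (x * y) ∂μ ∂ν := Measure.lintegral_mconv hf
    _ = ∫⁻ _, ∫⁻ y, f y ∂μ ∂ν := lintegral_congr_ae (hμ.mono fun _ hx ↦ hx.lintegral_comp hf)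
    _ = ∫⁻ y, f y ∂μ := by rw [lintegral_const, measure_univ, mul_one]

lemma map_mul_eq_right_of_indepFun {Ω : Type*} [MeasurableSpace Ω] {P : Measure Ω}
    [IsProbabilityMeasure P] {X Z : Ω → M} (hX : AEMeasurable X P) (hZ : AEMeasurable Z P)
    (hind : IndepFun X Z P)
    (hinv : ∀ᵐ x ∂P.map X, MeasurePreserving (x * ·) (P.map Z) (P.map Z)) :
    P.map (X * Z) = P.map Z := by
  have : IsProbabilityMeasure (P.map X) := Measure.isProbabilityMeasure_map hX
  rw [hind.map_mul_eq_map_mconv_map₀ hX hZ, mconv_eq_right_of_ae_measurePreserving hinv]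

end Convolution

section SignVector

variable {ι R : Type*} [DecidableEq ι]

/-- The sign vector in `{-1, 1}^ι` whose negative coordinates are those in `s`; multiplying
pointwise by it flips the signs of exactly these coordinates. -/
def signVector [One R] [Neg R] (s : Finset ι) : ι → R := s.piecewise (-1) 1

lemma signVector_mul_apply [Monoid R] [HasDistribNeg R] (s : Finset ι) (w : ι → R) (j : ι) :
    (signVector s * w : ι → R) j = if j ∈ s then -w j else w j := by
  by_cases hj : j ∈ s <;> simp [signVector, hj]

lemma exists_eq_signVector [One R] [Neg R] {H : Finset ι} {e : ι → R}
    (hsign : ∀ j ∈ H, e j = -1 ∨ e j = 1) (hone : ∀ j ∉ H, e j = 1) :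
    ∃ s ⊆ H, e = signVector s := by
  classical
  refine ⟨H.filter (e · = -1), H.filter_subset _, funext fun j ↦ ?_⟩
  by_cases hj : j ∈ H
  · by_cases hneg : e j = -1
    · simp [signVector, Finset.piecewise, hj, hneg]
    · simp [signVector, Finset.piecewise, (hsign j hj).resolve_left hneg]
  · simp [signVector, Finset.piecewise, hj, hone j hj]

lemma ae_map_exists_eq_signVector [Countable ι] [One R] [Neg R] [MeasurableSpace R]
    [MeasurableSingletonClass R] {Ω : Type*} [MeasurableSpace Ω] {P : Measure Ω} {H : Finset ι}
    {ε : Ω → ι → R} (hε : AEMeasurable ε P)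
    (hsign : ∀ j ∈ H, ∀ᵐ ω ∂P, ε ω j = -1 ∨ ε ω j = 1) (hone : ∀ j ∉ H, ∀ᵐ ω ∂P, ε ω j = 1) :
    ∀ᵐ e ∂P.map ε, ∃ s ⊆ H, e = signVector s := by
  have hfinite : {e : ι → R | ∃ s ⊆ H, e = signVector s}.Finite := by
    refine (H.powerset.finite_toSet.image signVector).subset ?_
    rintro _ ⟨s, hs, rfl⟩
    exact ⟨s, Finset.mem_coe.2 (Finset.mem_powerset.2 hs), rfl⟩
  rw [ae_map_iff hε hfinite.measurableSet]
  have hsign_all : ∀ᵐ ω ∂P, ∀ j, j ∈ H → ε ω j = -1 ∨ ε ω j = 1 :=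
    ae_all_iff.2 fun j ↦ Filter.eventually_imp_distrib_left.2 (hsign j)
  have hone_all : ∀ᵐ ω ∂P, ∀ j, j ∉ H → ε ω j = 1 :=
    ae_all_iff.2 fun j ↦ Filter.eventually_imp_distrib_left.2 (hone j)
  filter_upwards [hsign_all, hone_all] with ω hω hω' using exists_eq_signVector hω hω'

end SignVector

theorem knockoff_statistic_sign_symmetry_general {Ω α ι R : Type*} [MeasurableSpace Ω]
    [MeasurableSpace α] [DecidableEq ι] [Countable ι] [Monoid R] [HasDistribNeg R]
    [MeasurableSpace R] [MeasurableSingletonClass R] [MeasurableMul₂ R]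
    {P : Measure Ω} [IsProbabilityMeasure P] {H0 : Finset ι}
    {X : Ω → α} (hX : AEMeasurable X P) {σ : Finset ι → α → α}
    (hexch : ∀ s ⊆ H0, MeasurePreserving (σ s) (P.map X) (P.map X))
    {h : α → ι → R} (hh : Measurable h)
    (hflip : ∀ s ⊆ H0, ∀ x j, h (σ s x) j = if j ∈ s then -h x j else h x j)
    {ε : Ω → ι → R} (hε : AEMeasurable ε P) (hind : IndepFun ε X P)
    (hsign : ∀ j ∈ H0, ∀ᵐ ω ∂P, ε ω j = -1 ∨ ε ω j = 1)
    (hone : ∀ j ∉ H0, ∀ᵐ ω ∂P, ε ω j = 1) :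
    P.map (fun ω j ↦ ε ω j * h (X ω) j) = P.map (fun ω ↦ h (X ω)) := by
  have hlaw : MeasurePreserving h (P.map X) (P.map (h ∘ X)) :=
    ⟨hh, AEMeasurable.map_map_of_aemeasurable hh.aemeasurable hX⟩
  have hinv : ∀ s ⊆ H0, MeasurePreserving (signVector s * ·) (P.map (h ∘ X)) (P.map (h ∘ X)) := by
    intro s hs
    have hsemi : Function.Semiconj h (σ s) (signVector s * ·) := fun x ↦ funext fun j ↦
      (hflip s hs x j).trans (signVector_mul_apply s (h x) j).symm
    exact hlaw.of_semiconj (hexch s hs) hsemi (measurable_const_mul _)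
  refine map_mul_eq_right_of_indepFun hε (hh.comp_aemeasurable hX)
    (hind.comp measurable_id hh) ?_
  filter_upwards [ae_map_exists_eq_signVector hε hsign hone]
  rintro _ ⟨s, hs, rfl⟩
  exact hinv s hs

section SwapData

variable {p : ℕ} {𝒵 : Type*}

/-- The action of `swapPair` on the whole data `(a, ã, z)`, which leaves the remaining component `z`
fixed; in the theorem `z = (s, y)`. -/
def swapData (s : Finset (Fin p)) (x : (Fin p → ℝ) × (Fin p → ℝ) × 𝒵) :
    (Fin p → ℝ) × (Fin p → ℝ) × 𝒵 :=
  ((swapPair s x.1 x.2.1).1, (swapPair s x.1 x.2.1).2, x.2.2)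

lemma measurable_swapData [MeasurableSpace 𝒵] (s : Finset (Fin p)) :
    Measurable (swapData s : _ → (Fin p → ℝ) × (Fin p → ℝ) × 𝒵) := by
  refine .prodMk (measurable_pi_lambda _ fun j ↦ ?_)
    (.prodMk (measurable_pi_lambda _ fun j ↦ ?_) (by fun_prop))
  all_goals by_cases hj : j ∈ s <;> simp only [swapPair, hj, if_true, if_false] <;> fun_prop

end SwapData

section SignMeasure

instance isProbabilityMeasure_signMeasure : IsProbabilityMeasure signMeasure where
  measure_univ := by simp [signMeasure, ENNReal.inv_two_add_inv_two]

lemma ae_signMeasure : ∀ᵐ x ∂signMeasure, x = -1 ∨ x = 1 := by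
  simp [signMeasure]

lemma ae_eq_neg_one_or_one_of_hasLaw {Ω : Type*} [MeasurableSpace Ω] {P : Measure Ω} {X : Ω → ℝ}
    (hX : HasLaw X signMeasure P) : ∀ᵐ ω ∂P, X ω = -1 ∨ X ω = 1 :=
  ae_of_ae_map (p := fun x ↦ x = -1 ∨ x = 1) hX.aemeasurable (hX.map_eq ▸ ae_signMeasure)

end SignMeasure

/-- sign-flip symmetry of the knockoff statistics.
Suppose that for every `Ω ⊆ H0` the swapped data `([A,Ã]_swap(Ω), S, Y)` has the same law
as `((A,Ã), S, Y)`, that `h` is a measurable flip-sign statistic with `W = h(A,Ã,S,Y)`, and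
that `ε ∈ {−1,+1}^p` is independent of the data with `ε_j = +1` a.s. for `j ∉ H0` and
`(ε_j)_{j ∈ H0}` i.i.d. uniform on `{−1,+1}` (the joint law of `(ε, data)` is the product of
the coordinatewise sign law and the data law).  Then `(ε_1 W_1, …, ε_p W_p)` has the same
distribution as `(W_1, …, W_p)`. -/
theorem knockoff_statistic_sign_symmetry {p : ℕ} {Ω 𝒮 𝒴 : Type*}
    [MeasurableSpace Ω] [MeasurableSpace 𝒮] [MeasurableSpace 𝒴]
    (P : Measure Ω) [IsProbabilityMeasure P]
    (H0 : Finset (Fin p))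
    (A A' : Ω → Fin p → ℝ) (S : Ω → 𝒮) (Y : Ω → 𝒴)
    (hA : Measurable A) (hA' : Measurable A') (hS : Measurable S) (hY : Measurable Y)
    (hexch : ∀ Ωs : Finset (Fin p), Ωs ⊆ H0 →
      P.map (fun ω => ((swapPair Ωs (A ω) (A' ω)).1, (swapPair Ωs (A ω) (A' ω)).2, S ω, Y ω))
        = P.map (fun ω => (A ω, A' ω, S ω, Y ω)))
    (h : (Fin p → ℝ) × (Fin p → ℝ) × 𝒮 × 𝒴 → Fin p → ℝ) (hh : Measurable h)
    (hflip : ∀ (Ωs : Finset (Fin p)) (a a' : Fin p → ℝ) (s : 𝒮) (y : 𝒴) (j : Fin p),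
      h ((swapPair Ωs a a').1, (swapPair Ωs a a').2, s, y) j
        = if j ∈ Ωs then - h (a, a', s, y) j else h (a, a', s, y) j)
    (ε : Ω → Fin p → ℝ) (hε : Measurable ε)
    (hjoint : P.map (fun ω => (ε ω, A ω, A' ω, S ω, Y ω)) =
      (Measure.pi fun j : Fin p => if j ∈ H0 then signMeasure else Measure.dirac 1).prod
        (P.map (fun ω => (A ω, A' ω, S ω, Y ω)))) :
    P.map (fun ω => fun j : Fin p => ε ω j * h (A ω, A' ω, S ω, Y ω) j)
      = P.map (fun ω => h (A ω, A' ω, S ω, Y ω)) := by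
  have hD : Measurable fun ω ↦ (A ω, A' ω, S ω, Y ω) := by fun_prop
  have : IsProbabilityMeasure (P.map fun ω ↦ (A ω, A' ω, S ω, Y ω)) :=
    Measure.isProbabilityMeasure_map hD.aemeasurable
  have hlaw : HasLaw (fun ω ↦ (ε ω, A ω, A' ω, S ω, Y ω)) _ P := ⟨by fun_prop, hjoint⟩
  have hεlaw : HasLaw ε _ P := measurePreserving_fst.fun_comp_hasLaw hlaw
  have hind : IndepFun ε (fun ω ↦ (A ω, A' ω, S ω, Y ω)) P :=
    (indepFun_iff_hasLaw_prodMk_prod hεlaw ⟨hD.aemeasurable, rfl⟩).2 hlaw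
  have hεlaw_apply (j : Fin p) : HasLaw (fun ω ↦ ε ω j)
      (if j ∈ H0 then signMeasure else Measure.dirac 1) P :=
    (measurePreserving_eval _ j).fun_comp_hasLaw hεlaw
  have hswap : ∀ s ⊆ H0, MeasurePreserving (swapData s)
      (P.map fun ω ↦ (A ω, A' ω, S ω, Y ω)) (P.map fun ω ↦ (A ω, A' ω, S ω, Y ω)) := fun s hs ↦
    ⟨measurable_swapData s, (Measure.map_map (measurable_swapData s) hD).trans (hexch s hs)⟩
  exact knockoff_statistic_sign_symmetry_general hD.aemeasurable hswap hh
    (fun s _ x j ↦ hflip s x.1 x.2.1 x.2.2.1 x.2.2.2 j) hε.aemeasurable hind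
    (fun j hj ↦ ae_eq_neg_one_or_one_of_hasLaw (by simpa only [if_pos hj] using hεlaw_apply j))
    (fun j hj ↦ HasLaw.ae_eq_of_dirac (by simpa only [if_neg hj] using hεlaw_apply j))
end

section
/- Let W = (W_1,…,W_p) be a random vector in ℝ^p and H0 ⊆ {1,…,p} such that for every deterministic subset Ω ⊆ H0, the vector obtained from W by negating the coordinates in Ω has the same distribution as W. Fix α ∈ (0,1). Define the knockoff threshold τ_α = min{τ ∈ {|W_j| : j ∈ {1,…,p}, W_j ≠ 0} : #{j : W_j ≤ −τ} ≤ α · #{j : W_j ≥ τ}} and the selection Ĝ = {j : W_j ≥ τ_α}, with the convention Ĝ = ∅ if no such τ exists. Then the modified false discovery rate satisfies E[ |Ĝ ∩ H0| / (1/α + |Ĝ|) ] ≤ α. -/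
open MeasureTheory

/-- The candidate knockoff thresholds for statistics `w` at level `α`: the positive values
`τ ∈ {|w_j| : w_j ≠ 0}` satisfying `#{j : w_j ≤ −τ} ≤ α · #{j : w_j ≥ τ}`. -/
noncomputable def knockoffThresholds {p : ℕ} (α : ℝ) (w : Fin p → ℝ) : Finset ℝ :=
  ((Finset.univ.filter fun j : Fin p => w j ≠ 0).image fun j => |w j|).filter
    fun τ => ((Finset.univ.filter fun j : Fin p => w j ≤ -τ).card : ℝ)
      ≤ α * ((Finset.univ.filter fun j : Fin p => τ ≤ w j).card : ℝ)

/-- The knockoff selection `Ĝ = {j : w_j ≥ τ_α}` where `τ_α` is the smallest candidate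
threshold; `Ĝ = ∅` if no candidate threshold exists. -/
noncomputable def knockoffSelect {p : ℕ} (α : ℝ) (w : Fin p → ℝ) : Finset (Fin p) :=
  if h : (knockoffThresholds α w).Nonempty then
    Finset.univ.filter fun j : Fin p => (knockoffThresholds α w).min' h ≤ w j
  else ∅

/-!
Write `V = #{j ∈ H0 : W_j ≤ -τ_α}`. The inequality defining `τ_α` gives `(1 + V) / α ≤ 1/α + |Ĝ|`,
so the modified false discovery proportion is at most `α * ∑ j ∈ H0, 1{j ∈ Ĝ} / (1 + V)`.
By sign symmetry the `j`-th summand may be evaluated, in expectation, at `W` with its `j`-th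
coordinate negated. The resulting sum is at most `1` pointwise: let `J` be the set of `j ∈ H0` that
are selected after negating `w_j`. Negating a coordinate lying below `-τ` moves one unit
from `#{i : w_i ≤ -τ}` to `#{i : w_i ≥ τ}`, whichever coordinate it is, so the candidate thresholds
reached by the elements of `J` are interchangeable. Hence after negating `w_j` with `j ∈ J`, every
other element of `J` still lies below minus the threshold, and `1 + V ≥ |J|` in each of the `|J|`
nonzero summands.
-/

open ProbabilityTheory
open scoped Finset

section NegCoord

variable {ι G : Type*} [DecidableEq ι]

/-- The vector `w` with the sign of its `j`-th coordinate reversed. -/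
def negCoord [Neg G] (j : ι) (w : ι → G) : ι → G :=
  Function.update w j (-w j)

@[simp]
lemma negCoord_self [Neg G] (j : ι) (w : ι → G) : negCoord j w j = -w j :=
  Function.update_self ..

lemma negCoord_of_ne [Neg G] {i j : ι} (h : i ≠ j) (w : ι → G) : negCoord j w i = w i :=
  Function.update_of_ne h ..

lemma negCoord_eq_ite [Neg G] (j : ι) (w : ι → G) :
    negCoord j w = fun i => if i = j then -w i else w i := by
  ext i
  obtain rfl | h := eq_or_ne i j
  · simp
  · simp [negCoord_of_ne h w, h]

@[simp]
lemma abs_negCoord_apply [Lattice G] [AddGroup G] (j : ι) (w : ι → G) (i : ι) :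
    |negCoord j w i| = |w i| := by
  simp only [negCoord_eq_ite]
  split_ifs <;> simp

lemma measurable_negCoord [Neg G] [MeasurableSpace G] [MeasurableNeg G] (j : ι) :
    Measurable (negCoord j : (ι → G) → ι → G) :=
  measurable_update'.comp (measurable_id.prodMk (measurable_pi_apply j).neg)

variable [Fintype ι] [AddCommGroup G] [LinearOrder G] [IsOrderedAddMonoid G]
  {w : ι → G} {j : ι} {τ : G}

lemma filter_negCoord_le_neg (hτ : 0 < τ) (hj : w j ≤ -τ) :
    ({i | negCoord j w i ≤ -τ} : Finset ι) = ({i | w i ≤ -τ} : Finset ι).erase j := by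
  have h_lt : w j < τ := hj.trans_lt (neg_lt_self hτ)
  ext i
  obtain rfl | h := eq_or_ne i j
  · simp [h_lt]
  · simp [negCoord_of_ne h w, h]

lemma filter_le_negCoord (hj : w j ≤ -τ) :
    ({i | τ ≤ negCoord j w i} : Finset ι) = insert j ({i | τ ≤ w i} : Finset ι) := by
  ext i
  obtain rfl | h := eq_or_ne i j
  · simpa using le_neg.2 hj
  · simp [negCoord_of_ne h w, h]

lemma card_negCoord_le_neg (hτ : 0 < τ) (hj : w j ≤ -τ) :
    #{i | negCoord j w i ≤ -τ} = #{i | w i ≤ -τ} - 1 := by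
  rw [filter_negCoord_le_neg hτ hj, Finset.card_erase_of_mem (by simpa using hj)]

lemma card_le_negCoord (hτ : 0 < τ) (hj : w j ≤ -τ) :
    #{i | τ ≤ negCoord j w i} = #{i | τ ≤ w i} + 1 := by
  have h_lt : w j < τ := hj.trans_lt (neg_lt_self hτ)
  rw [filter_le_negCoord hj, Finset.card_insert_of_notMem (by simpa using h_lt)]

end NegCoord

lemma measurable_natCast_card_filter {X ι R : Type*} [MeasurableSpace X] [Fintype ι] [NatCast R]
    [MeasurableSpace R] {r : X → ι → Prop} [∀ x, DecidablePred (r x)]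
    (hr : ∀ i, Measurable (r · i)) : Measurable fun x => (#{i | r x i} : R) :=
  (Measurable.of_discrete (f := fun s : Finset ι => (#s : R))).comp <|
    measurable_finset_iff.2 fun i => by simpa using hr i

section Knockoff

variable {p : ℕ} {α τ : ℝ} {w : Fin p → ℝ} {j k : Fin p}

lemma mem_knockoffThresholds_iff :
    τ ∈ knockoffThresholds α w ↔
      (∃ i, w i ≠ 0 ∧ |w i| = τ) ∧ (#{i | w i ≤ -τ} : ℝ) ≤ α * #{i | τ ≤ w i} := by
  simp [knockoffThresholds]

lemma pos_of_mem_knockoffThresholds (hτ : τ ∈ knockoffThresholds α w) : 0 < τ := by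
  obtain ⟨⟨i, hi, rfl⟩, -⟩ := mem_knockoffThresholds_iff.1 hτ
  exact abs_pos.2 hi

lemma exists_mem_knockoffThresholds_iff {q : ℝ → Prop} :
    (∃ τ ∈ knockoffThresholds α w, q τ) ↔
      ∃ i, (w i ≠ 0 ∧ (#{j | w j ≤ -|w i|} : ℝ) ≤ α * #{j | |w i| ≤ w j}) ∧ q |w i| := by
  simp only [mem_knockoffThresholds_iff]
  constructor
  · rintro ⟨_, ⟨⟨i, hi, rfl⟩, h_card⟩, hq⟩
    exact ⟨i, ⟨hi, h_card⟩, hq⟩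
  · rintro ⟨i, ⟨hi, h_card⟩, hq⟩
    exact ⟨_, ⟨⟨i, hi, rfl⟩, h_card⟩, hq⟩

lemma mem_knockoffThresholds_negCoord_congr (hj : w j ≤ -τ) (hk : w k ≤ -τ) :
    τ ∈ knockoffThresholds α (negCoord j w) ↔ τ ∈ knockoffThresholds α (negCoord k w) := by
  suffices H : ∀ {j k : Fin p}, w j ≤ -τ → w k ≤ -τ →
      τ ∈ knockoffThresholds α (negCoord j w) → τ ∈ knockoffThresholds α (negCoord k w) from
    ⟨H hj hk, H hk hj⟩
  intro j k hj hk h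
  have hτ := pos_of_mem_knockoffThresholds h
  simpa only [mem_knockoffThresholds_iff, ← abs_pos, abs_negCoord_apply,
    card_negCoord_le_neg hτ hj, card_negCoord_le_neg hτ hk,
    card_le_negCoord hτ hj, card_le_negCoord hτ hk] using h

lemma mem_knockoffSelect_iff :
    j ∈ knockoffSelect α w ↔ ∃ τ ∈ knockoffThresholds α w, τ ≤ w j := by
  unfold knockoffSelect
  split_ifs with h
  · rw [Finset.mem_filter_univ]
    exact ⟨fun hj => ⟨_, Finset.min'_mem _ h, hj⟩,
      fun ⟨_, hτ, hj⟩ => (Finset.min'_le _ _ hτ).trans hj⟩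
  · simp [Finset.not_nonempty_iff_eq_empty.1 h]

open Classical in
/-- The mirror image `{j : w_j ≤ -τ_α}` of the knockoff selection. Quantifying over all candidate
thresholds rather than taking the smallest one makes it empty when there is none. -/
noncomputable def knockoffMirror (α : ℝ) (w : Fin p → ℝ) : Finset (Fin p) :=
  {j | ∃ τ ∈ knockoffThresholds α w, w j ≤ -τ}

lemma mem_knockoffMirror_iff :
    j ∈ knockoffMirror α w ↔ ∃ τ ∈ knockoffThresholds α w, w j ≤ -τ := by
  simp [knockoffMirror]

lemma card_knockoffMirror_le (α : ℝ) (w : Fin p → ℝ) :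
    (#(knockoffMirror α w) : ℝ) ≤ α * #(knockoffSelect α w) := by
  obtain h | h := (knockoffThresholds α w).eq_empty_or_nonempty
  · simp [knockoffMirror, knockoffSelect, h]
  set τ := (knockoffThresholds α w).min' h
  have hτ : τ ∈ knockoffThresholds α w := Finset.min'_mem _ h
  have h_mirror : knockoffMirror α w = ({j | w j ≤ -τ} : Finset (Fin p)) := by
    ext j
    rw [mem_knockoffMirror_iff, Finset.mem_filter_univ]
    exact ⟨fun ⟨σ, hσ, hj⟩ => hj.trans (neg_le_neg (Finset.min'_le _ _ hσ)), fun hj => ⟨τ, hτ, hj⟩⟩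
  have h_select : knockoffSelect α w = ({j | τ ≤ w j} : Finset (Fin p)) := dif_pos h
  rw [h_mirror, h_select]
  exact (mem_knockoffThresholds_iff.1 hτ).2

/-- The contribution `1{j ∈ Ĝ} / (1 + #{k ∈ H0 : w_k ≤ -τ_α})` of a coordinate `j` to the upper
bound for the modified false discovery proportion. -/
noncomputable def knockoffWeight (α : ℝ) (H0 : Finset (Fin p)) (j : Fin p) (w : Fin p → ℝ) : ℝ :=
  if j ∈ knockoffSelect α w then (1 + (#(knockoffMirror α w ∩ H0) : ℝ))⁻¹ else 0

lemma card_inter_div_le_sum_knockoffWeight (hα : 0 < α) (H0 : Finset (Fin p)) (w : Fin p → ℝ) :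
    (#(knockoffSelect α w ∩ H0) : ℝ) / (1 / α + #(knockoffSelect α w)) ≤
      α * ∑ j ∈ H0, knockoffWeight α H0 j w := by
  set V := #(knockoffMirror α w ∩ H0) with hV
  have hV_le : (V : ℝ) ≤ α * #(knockoffSelect α w) :=
    (Nat.cast_le.2 (Finset.card_le_card Finset.inter_subset_left)).trans
      (card_knockoffMirror_le α w)
  have h_denom : (1 + V) / α ≤ 1 / α + #(knockoffSelect α w) := by
    rw [add_div]
    gcongr
    exact (div_le_iff₀' hα).2 hV_le
  calc (#(knockoffSelect α w ∩ H0) : ℝ) / (1 / α + #(knockoffSelect α w))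
      ≤ #(knockoffSelect α w ∩ H0) / ((1 + V) / α) := by gcongr
    _ = α * (#(knockoffSelect α w ∩ H0) * (1 + (V : ℝ))⁻¹) := by field_simp
    _ = α * ∑ j ∈ H0, knockoffWeight α H0 j w := by
      simp only [knockoffWeight, hV, ← Finset.sum_filter, Finset.sum_const, nsmul_eq_mul,
        Finset.filter_mem_eq_inter, Finset.inter_comm H0 (knockoffSelect α w)]

lemma mem_knockoffMirror_negCoord (hjk : k ≠ j) (hj : j ∈ knockoffSelect α (negCoord j w))
    (hk : k ∈ knockoffSelect α (negCoord k w)) : k ∈ knockoffMirror α (negCoord j w) := by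
  rw [mem_knockoffSelect_iff] at hj hk
  obtain ⟨τj, hτj, hj⟩ := hj
  obtain ⟨τk, hτk, hk⟩ := hk
  rw [negCoord_self, le_neg] at hj hk
  rw [mem_knockoffMirror_iff, negCoord_of_ne hjk]
  obtain h | h := le_total τj τk
  · exact ⟨τj, hτj, by linarith⟩
  · exact ⟨τk, (mem_knockoffThresholds_negCoord_congr hk (by linarith)).1 hτk, hk⟩

lemma sum_knockoffWeight_negCoord_le_one (α : ℝ) (H0 : Finset (Fin p)) (w : Fin p → ℝ) :
    ∑ j ∈ H0, knockoffWeight α H0 j (negCoord j w) ≤ 1 := by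
  set J := {j ∈ H0 | j ∈ knockoffSelect α (negCoord j w)} with hJ
  have h_card : ∀ j ∈ J, #J ≤ 1 + #(knockoffMirror α (negCoord j w) ∩ H0) := by
    intro j hj
    have h_sub : J.erase j ⊆ knockoffMirror α (negCoord j w) ∩ H0 := by
      intro k hk
      simp only [hJ, Finset.mem_erase, Finset.mem_filter] at hj hk
      exact Finset.mem_inter.2 ⟨mem_knockoffMirror_negCoord hk.1 hj.2 hk.2.2, hk.2.1⟩
    rw [← Finset.card_erase_add_one hj, add_comm]
    gcongr
  calc ∑ j ∈ H0, knockoffWeight α H0 j (negCoord j w)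
      = ∑ j ∈ J, (1 + (#(knockoffMirror α (negCoord j w) ∩ H0) : ℝ))⁻¹ := by
        simp only [knockoffWeight, hJ, Finset.sum_filter]
    _ ≤ ∑ _j ∈ J, (#J : ℝ)⁻¹ := by
        refine Finset.sum_le_sum fun j hj => inv_anti₀ ?_ (mod_cast h_card j hj)
        exact mod_cast Finset.card_pos.2 ⟨j, hj⟩
    _ ≤ 1 := by
        rw [Finset.sum_const, nsmul_eq_mul]
        exact mul_inv_le_one

lemma knockoffWeight_nonneg (α : ℝ) (H0 : Finset (Fin p)) (j : Fin p) (w : Fin p → ℝ) :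
    0 ≤ knockoffWeight α H0 j w := by
  unfold knockoffWeight
  positivity

lemma knockoffWeight_le_one (α : ℝ) (H0 : Finset (Fin p)) (j : Fin p) (w : Fin p → ℝ) :
    knockoffWeight α H0 j w ≤ 1 := by
  unfold knockoffWeight
  split_ifs
  · exact inv_le_one_of_one_le₀ (by simp)
  · exact zero_le_one

lemma measurable_exists_mem_knockoffThresholds (α : ℝ) {q : (Fin p → ℝ) → ℝ → Prop}
    (hq : ∀ i, Measurable fun w => q w |w i|) :
    Measurable fun w => ∃ τ ∈ knockoffThresholds α w, q w τ := by
  simp only [exists_mem_knockoffThresholds_iff]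
  have h_card_neg (i : Fin p) : Measurable fun w : Fin p → ℝ => (#{j | w j ≤ -|w i|} : ℝ) :=
    measurable_natCast_card_filter fun j => by fun_prop
  have h_card_pos (i : Fin p) : Measurable fun w : Fin p → ℝ => (#{j | |w i| ≤ w j} : ℝ) :=
    measurable_natCast_card_filter fun j => by fun_prop
  have h_ne (i : Fin p) : Measurable fun w : Fin p → ℝ => w i ≠ 0 := by fun_prop
  exact .exists fun i => ((h_ne i).and
    (measurableSet_le (h_card_neg i) ((h_card_pos i).const_mul α)).mem).and (hq i)

lemma measurable_knockoffSelect (α : ℝ) : Measurable (knockoffSelect (p := p) α) := by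
  refine measurable_finset_iff.2 fun j => ?_
  simp only [mem_knockoffSelect_iff]
  exact measurable_exists_mem_knockoffThresholds α fun i => by fun_prop

lemma measurable_knockoffMirror (α : ℝ) : Measurable (knockoffMirror (p := p) α) := by
  refine measurable_finset_iff.2 fun j => ?_
  simp only [mem_knockoffMirror_iff]
  exact measurable_exists_mem_knockoffThresholds α fun i => by fun_prop

lemma measurable_knockoffWeight (α : ℝ) (H0 : Finset (Fin p)) (j : Fin p) :
    Measurable (knockoffWeight α H0 j) := by
  have h_inv : Measurable fun w => (1 + (#(knockoffMirror α w ∩ H0) : ℝ))⁻¹ :=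
    (Measurable.of_discrete (f := fun s : Finset (Fin p) => (1 + (#(s ∩ H0) : ℝ))⁻¹)).comp
      (measurable_knockoffMirror α)
  exact .ite (measurable_finset_iff.1 (measurable_knockoffSelect α) j).setOf h_inv measurable_const

lemma integrable_knockoffWeight_comp {Ω : Type*} [MeasurableSpace Ω] {P : Measure Ω}
    [IsFiniteMeasure P] {W : Ω → Fin p → ℝ} (hW : AEMeasurable W P) (α : ℝ) (H0 : Finset (Fin p))
    (j : Fin p) : Integrable (fun ω => knockoffWeight α H0 j (W ω)) P :=
  .of_mem_Icc 0 1 ((measurable_knockoffWeight α H0 j).comp_aemeasurable hW) <| .of_forall fun _ =>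
    ⟨knockoffWeight_nonneg .., knockoffWeight_le_one ..⟩

end Knockoff

theorem knockoff_mFDR_control_general {p : ℕ} {Ω : Type*} [MeasurableSpace Ω] {P : Measure Ω}
    [IsFiniteMeasure P] {H0 : Finset (Fin p)} {α : ℝ} (hα : 0 < α) {W : Ω → Fin p → ℝ}
    (hsign : ∀ j ∈ H0, IdentDistrib (fun ω => negCoord j (W ω)) W P P) :
    ∫ ω, (#(knockoffSelect α (W ω) ∩ H0) : ℝ) / (1 / α + #(knockoffSelect α (W ω))) ∂P ≤
      α * P.real Set.univ := by
  have h_int : ∀ j ∈ H0, Integrable (fun ω => knockoffWeight α H0 j (W ω)) P := fun j hj =>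
    integrable_knockoffWeight_comp (hsign j hj).aemeasurable_snd α H0 j
  have h_int_neg : ∀ j ∈ H0, Integrable (fun ω => knockoffWeight α H0 j (negCoord j (W ω))) P :=
    fun j hj => integrable_knockoffWeight_comp (hsign j hj).aemeasurable_fst α H0 j
  have h_symm : ∀ j ∈ H0, ∫ ω, knockoffWeight α H0 j (W ω) ∂P =
      ∫ ω, knockoffWeight α H0 j (negCoord j (W ω)) ∂P := fun j hj =>
    ((hsign j hj).comp (measurable_knockoffWeight α H0 j)).integral_eq.symm
  calc ∫ ω, (#(knockoffSelect α (W ω) ∩ H0) : ℝ) / (1 / α + #(knockoffSelect α (W ω))) ∂P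
      ≤ ∫ ω, α * ∑ j ∈ H0, knockoffWeight α H0 j (W ω) ∂P :=
        integral_mono_of_nonneg (.of_forall fun ω => by positivity)
          ((integrable_finsetSum _ h_int).const_mul α)
          (.of_forall fun ω => card_inter_div_le_sum_knockoffWeight hα H0 (W ω))
    _ = α * ∫ ω, ∑ j ∈ H0, knockoffWeight α H0 j (negCoord j (W ω)) ∂P := by
        rw [integral_const_mul, integral_finsetSum _ h_int, integral_finsetSum _ h_int_neg,
          Finset.sum_congr rfl h_symm]
    _ ≤ α * ∫ _, 1 ∂P := by
        gcongr
        · exact integrable_finsetSum _ h_int_neg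
        · exact integrable_const _
        · exact fun ω => sum_knockoffWeight_negCoord_le_one α H0 (W ω)
    _ = α * P.real Set.univ := by simp

/-- mFDR control of the knockoff filter.
Let `W` be a random vector in `ℝ^p` such that negating any deterministic subset of the null
coordinates `H0` leaves its distribution unchanged, and let `α ∈ (0,1)`.  Then the knockoff
selection at level `α` controls the modified false discovery rate:
`E[ |Ĝ ∩ H0| / (1/α + |Ĝ|) ] ≤ α`. -/
theorem knockoff_mFDR_control {p : ℕ} {Ω : Type*} [MeasurableSpace Ω]
    (P : Measure Ω) [IsProbabilityMeasure P]
    (H0 : Finset (Fin p)) (α : ℝ) (hα : 0 < α) (hα1 : α < 1)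
    (W : Ω → Fin p → ℝ) (hW : Measurable W)
    (hsign : ∀ Ωs : Finset (Fin p), Ωs ⊆ H0 →
      P.map (fun ω => fun j : Fin p => if j ∈ Ωs then - W ω j else W ω j) = P.map W) :
    ∫ ω, ((knockoffSelect α (W ω) ∩ H0).card : ℝ)
        / (1 / α + ((knockoffSelect α (W ω)).card : ℝ)) ∂P ≤ α := by
  simpa using knockoff_mFDR_control_general (P := P) hα fun j hj =>
    ⟨((measurable_negCoord j).comp hW).aemeasurable, hW.aemeasurable, by
      simpa [negCoord_eq_ite] using hsign {j} (by simpa using hj)⟩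
end
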